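/- arXiv:2210.17278 — 11 statements merged into one kernel-verified Lean document; each statement's English description precedes it below -/
import Mathlib

section
/- Let (X,τ) be a topological space, 𝒫 a primal on X, and A, B ⊆ X. If A is open in X, then A ∩ B⋄ = A ∩ (A ∩ B)⋄, and this set is contained in (A ∩ B)⋄. -/
open Set

/-- A collection `P` of subsets of `X` is a *primal* on `X`. -/
structure IsSetPrimal {X : Type*} (P : Set (Set X)) : Prop where
  univ_not_mem : Set.univ ∉ P
  mem_of_subset : ∀ {A B : Set X}, A ∈ P → B ⊆ A → B ∈ P
  mem_or_mem_of_inter_mem : ∀ {A B : Set X}, A ∩ B ∈ P → A ∈ P ∨ B ∈ P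

/-- The primal-diamond operator: `A⋄ = {x | ∀ open U ∋ x, Aᶜ ∪ Uᶜ ∈ P}`. -/
def primalDiamond {X : Type*} [TopologicalSpace X] (P : Set (Set X)) (A : Set X) : Set X :=
  {x | ∀ U : Set X, IsOpen U → x ∈ U → Aᶜ ∪ Uᶜ ∈ P}

/-- The `Ψ` operator: `Ψ(A) = {x | ∃ open U ∋ x, (U \ A)ᶜ ∉ P}`. -/
def primalPsi {X : Type*} [TopologicalSpace X] (P : Set (Set X)) (A : Set X) : Set X :=
  {x | ∃ U : Set X, IsOpen U ∧ x ∈ U ∧ (U \ A)ᶜ ∉ P}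

/-- The topology is *suitable* for the primal `P` if `Aᶜ ∪ A⋄ ∉ P` for all `A`. -/
def SuitableForPrimal {X : Type*} [TopologicalSpace X] (P : Set (Set X)) : Prop :=
  ∀ A : Set X, Aᶜ ∪ primalDiamond P A ∉ P

theorem stmt_0 {X : Type*} [TopologicalSpace X] (P : Set (Set X)) (hP : IsSetPrimal P)
    (A B : Set X) (hA : IsOpen A) :
    A ∩ primalDiamond P B = A ∩ primalDiamond P (A ∩ B) ∧
    A ∩ primalDiamond P (A ∩ B) ⊆ primalDiamond P (A ∩ B) := by
  refine ⟨?_, inter_subset_right⟩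
  ext x
  refine and_congr_right fun hxA => ⟨fun h U hU hxU => ?_, fun h U hU hxU => ?_⟩
  · refine hP.mem_of_subset (h (A ∩ U) (hA.inter hU) ⟨hxA, hxU⟩) ?_
    rw [compl_inter, compl_inter, union_comm Aᶜ Bᶜ, union_assoc]
  · exact hP.mem_of_subset (h U hU hxU)
      (union_subset_union_left _ (compl_subset_compl.mpr inter_subset_right))
end

section
/- Let (X,τ) be a topological space and 𝒫 a primal on X. If every closed subset of X other than X itself belongs to 𝒫, then U ⊆ U⋄ for every open set U of X. -/
open Set

theorem stmt_1 {X : Type*} [TopologicalSpace X] (P : Set (Set X)) (hP : IsSetPrimal P)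
    (h : ∀ F : Set X, IsClosed F → F ≠ Set.univ → F ∈ P) :
    ∀ U : Set X, IsOpen U → U ⊆ primalDiamond P U := by
  intro U hU x hxU V hV hxV
  refine h _ (hU.isClosed_compl.union hV.isClosed_compl) fun huniv => ?_
  have hx : x ∈ Uᶜ ∪ Vᶜ := huniv ▸ mem_univ x
  exact hx.elim (fun hn => hn hxU) (fun hn => hn hxV)
end

section
/- Let (X,τ) be a topological space, 𝒫 a primal on X, and A, B ⊆ X. Then A⋄ \ B⋄ = (A \ B)⋄ \ B⋄. -/
open Set

/-- The primal-diamond operator is monotone. -/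
theorem IsSetPrimal.primalDiamond_mono {X : Type*} [TopologicalSpace X] {P : Set (Set X)}
    (hP : IsSetPrimal P) {A B : Set X} (h : A ⊆ B) : primalDiamond P A ⊆ primalDiamond P B :=
  fun _ hx U hU hxU ↦
    hP.mem_of_subset (hx U hU hxU) (union_subset_union_left _ (compl_subset_compl.mpr h))

/-- The diamond of `A` is covered by the diamonds of `A \ B` and `B`. -/
theorem IsSetPrimal.primalDiamond_subset_union {X : Type*} [TopologicalSpace X] {P : Set (Set X)}
    (hP : IsSetPrimal P) (A B : Set X) :
    primalDiamond P A ⊆ primalDiamond P (A \ B) ∪ primalDiamond P B := by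
  intro x hA
  by_contra hx
  simp only [primalDiamond, mem_union, mem_ofPred_eq, not_or, not_forall] at hx
  obtain ⟨⟨U, hU, hxU, hUP⟩, V, hV, hxV, hVP⟩ := hx
  have hinter : ((A \ B)ᶜ ∪ Uᶜ) ∩ (Bᶜ ∪ Vᶜ) ⊆ Aᶜ ∪ (U ∩ V)ᶜ := by
    intro y
    simp only [mem_inter_iff, mem_union, mem_compl_iff, mem_sdiff]
    tauto
  exact (hP.mem_or_mem_of_inter_mem
    (hP.mem_of_subset (hA _ (hU.inter hV) ⟨hxU, hxV⟩) hinter)).elim hUP hVP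

theorem stmt_3 {X : Type*} [TopologicalSpace X] (P : Set (Set X)) (hP : IsSetPrimal P)
    (A B : Set X) :
    primalDiamond P A \ primalDiamond P B = primalDiamond P (A \ B) \ primalDiamond P B := by
  apply Subset.antisymm
  · rintro x ⟨hA, hB⟩
    exact ⟨(hP.primalDiamond_subset_union A B hA).resolve_right hB, hB⟩
  · exact sdiff_subset_sdiff_left (hP.primalDiamond_mono sdiff_subset)
end

section
/- Let (X,τ) be a topological space, 𝒫 a primal on X, and A, B ⊆ X with Bᶜ ∉ 𝒫. Then (A ∪ B)⋄ = A⋄ = (A \ B)⋄. -/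
open Set

/-- The diamond operator is monotone up to a set whose complement is not in the primal. -/
theorem primalDiamond_subset_of_subset_union {X : Type*} [TopologicalSpace X] {P : Set (Set X)}
    (hP : IsSetPrimal P) {A B C : Set X} (hB : Bᶜ ∉ P) (hC : C ⊆ A ∪ B) :
    primalDiamond P C ⊆ primalDiamond P A := by
  intro x hx U hU hxU
  have hsub : (Aᶜ ∪ Uᶜ) ∩ Bᶜ ⊆ Cᶜ ∪ Uᶜ := by
    rintro y ⟨hAU | hyU, hyB⟩
    · exact Or.inl fun hyC => (hC hyC).elim hAU hyB
    · exact Or.inr hyU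
  exact (hP.mem_or_mem_of_inter_mem (hP.mem_of_subset (hx U hU hxU) hsub)).resolve_right hB

theorem stmt_4 {X : Type*} [TopologicalSpace X] (P : Set (Set X)) (hP : IsSetPrimal P)
    (A B : Set X) (hB : Bᶜ ∉ P) :
    primalDiamond P (A ∪ B) = primalDiamond P A ∧
    primalDiamond P A = primalDiamond P (A \ B) := by
  refine ⟨Subset.antisymm ?_ ?_, Subset.antisymm ?_ ?_⟩ <;>
    refine primalDiamond_subset_of_subset_union hP hB ?_
  · exact Subset.rfl
  · exact subset_union_left.trans subset_union_left
  · rw [sdiff_union_self]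
    exact subset_union_left
  · exact sdiff_subset.trans subset_union_left
end

section
/- Let (X,τ) be a topological space, 𝒫 a primal on X, and A, B ⊆ X. Then Ψ(A ∩ B) = Ψ(A) ∩ Ψ(B). -/
open Set

/-- The operator `Ψ` is monotone. -/
theorem IsSetPrimal.primalPsi_mono {X : Type*} [TopologicalSpace X] {P : Set (Set X)}
    (hP : IsSetPrimal P) {A B : Set X} (h : A ⊆ B) : primalPsi P A ⊆ primalPsi P B := by
  rintro x ⟨U, hU, hxU, hUA⟩
  exact ⟨U, hU, hxU, fun hUB =>
    hUA (hP.mem_of_subset hUB (compl_subset_compl.2 (sdiff_subset_sdiff_right h)))⟩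

theorem stmt_6 {X : Type*} [TopologicalSpace X] (P : Set (Set X)) (hP : IsSetPrimal P)
    (A B : Set X) : primalPsi P (A ∩ B) = primalPsi P A ∩ primalPsi P B := by
  refine Subset.antisymm (subset_inter (hP.primalPsi_mono inter_subset_left)
    (hP.primalPsi_mono inter_subset_right)) ?_
  rintro x ⟨⟨U, hU, hxU, hUA⟩, ⟨V, hV, hxV, hVB⟩⟩
  refine ⟨U ∩ V, hU.inter hV, ⟨hxU, hxV⟩, fun h => ?_⟩
  have hsub : (U \ A)ᶜ ∩ (V \ B)ᶜ ⊆ ((U ∩ V) \ (A ∩ B))ᶜ := by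
    rintro y ⟨hyA, hyB⟩ ⟨⟨hyU, hyV⟩, hy⟩
    exact hy ⟨by_contra fun hA => hyA ⟨hyU, hA⟩, by_contra fun hB => hyB ⟨hyV, hB⟩⟩
  exact (hP.mem_or_mem_of_inter_mem (hP.mem_of_subset h hsub)).elim hUA hVB
end

section
/- Let (X,τ) be a topological space, 𝒫 a primal on X, and A ⊆ X. If Aᶜ ∉ 𝒫, then Ψ(A) = X \ X⋄. -/
open Set

theorem stmt_8 {X : Type*} [TopologicalSpace X] (P : Set (Set X)) (hP : IsSetPrimal P)
    (A : Set X) (hA : Aᶜ ∉ P) : primalPsi P A = (primalDiamond P Set.univ)ᶜ := by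
  have key (U : Set X) : (U \ A)ᶜ ∈ P ↔ Uᶜ ∈ P := by
    refine ⟨fun h => hP.mem_of_subset h (compl_subset_compl.2 sdiff_subset), fun h => ?_⟩
    have hsub : (U \ A)ᶜ ∩ Aᶜ ⊆ Uᶜ := fun x hx hU => hx.1 ⟨hU, hx.2⟩
    exact (hP.mem_or_mem_of_inter_mem (hP.mem_of_subset h hsub)).resolve_right hA
  ext x
  simp [primalPsi, primalDiamond, key]
end

section
/- Let (X,τ) be a topological space, 𝒫 a primal on X, A ⊆ X, and I ⊆ X with Iᶜ ∉ 𝒫. Then Ψ(A \ I) = Ψ(A) and Ψ(A ∪ I) = Ψ(A). -/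
open Set

/-- `Ψ` is monotone modulo sets whose complement is not in the primal. -/
theorem primalPsi_subset_of_subset_union {X : Type*} [TopologicalSpace X] {P : Set (Set X)}
    (hP : IsSetPrimal P) {A B I : Set X} (hI : Iᶜ ∉ P) (hAB : A ⊆ B ∪ I) :
    primalPsi P A ⊆ primalPsi P B := by
  rintro x ⟨U, hU, hxU, hUA⟩
  refine ⟨U, hU, hxU, fun hUB => ?_⟩
  have hsub : (U \ A)ᶜ ∩ Iᶜ ⊆ (U \ B)ᶜ := by
    rintro y ⟨hyA, hyI⟩ ⟨hyU, hyB⟩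
    exact hyA ⟨hyU, fun hy => (hAB hy).elim hyB hyI⟩
  exact (hP.mem_or_mem_of_inter_mem (hP.mem_of_subset hUB hsub)).elim hUA hI

theorem stmt_10 {X : Type*} [TopologicalSpace X] (P : Set (Set X)) (hP : IsSetPrimal P)
    (A I : Set X) (hI : Iᶜ ∉ P) :
    primalPsi P (A \ I) = primalPsi P A ∧ primalPsi P (A ∪ I) = primalPsi P A := by
  refine ⟨Subset.antisymm ?_ ?_, Subset.antisymm ?_ ?_⟩ <;>
    refine primalPsi_subset_of_subset_union hP hI ?_
  · exact sdiff_subset.trans subset_union_left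
  · exact sdiff_union_self.symm ▸ subset_union_left
  · exact Subset.rfl
  · exact subset_union_left.trans subset_union_left
end

section
/- Let (X,τ) be a topological space, 𝒫 a primal on X, and A, B ⊆ X. If the complement of the symmetric difference (A \ B) ∪ (B \ A) is not in 𝒫, then Ψ(A) = Ψ(B). -/
open Set

/-- If `(A \ B)ᶜ ∉ P` then `Ψ(A) ⊆ Ψ(B)`. -/
theorem primalPsi_subset_of_compl_diff_notMem {X : Type*} [TopologicalSpace X]
    {P : Set (Set X)} (hP : IsSetPrimal P) {A B : Set X} (h : (A \ B)ᶜ ∉ P) :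
    primalPsi P A ⊆ primalPsi P B := by
  rintro x ⟨U, hU, hxU, hUA⟩
  refine ⟨U, hU, hxU, fun hUB => ?_⟩
  have hsub : (U \ A)ᶜ ∩ (A \ B)ᶜ ⊆ (U \ B)ᶜ := by
    rintro y ⟨h₁, h₂⟩ ⟨hyU, hyB⟩
    exact h₁ ⟨hyU, fun hyA => h₂ ⟨hyA, hyB⟩⟩
  exact (hP.mem_or_mem_of_inter_mem (hP.mem_of_subset hUB hsub)).elim hUA h

theorem stmt_11 {X : Type*} [TopologicalSpace X] (P : Set (Set X)) (hP : IsSetPrimal P)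
    (A B : Set X) (h : ((A \ B) ∪ (B \ A))ᶜ ∉ P) :
    primalPsi P A = primalPsi P B := by
  apply Subset.antisymm
  · exact primalPsi_subset_of_compl_diff_notMem hP fun hAB =>
      h (hP.mem_of_subset hAB (compl_subset_compl.2 subset_union_left))
  · exact primalPsi_subset_of_compl_diff_notMem hP fun hBA =>
      h (hP.mem_of_subset hBA (compl_subset_compl.2 subset_union_right))
end

section
/- Let (X,τ) be a topological space and 𝒫 a primal on X such that τ is suitable for 𝒫. Then the diamond operator is idempotent: (A⋄)⋄ = A⋄ for every A ⊆ X. -/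
open Set

/-- The diamond operator of a primal satisfies `(A⋄)⋄ ⊆ A⋄` in every topology. -/
theorem primalDiamond_primalDiamond_subset {X : Type*} [TopologicalSpace X] {P : Set (Set X)}
    (hP : IsSetPrimal P) (A : Set X) :
    primalDiamond P (primalDiamond P A) ⊆ primalDiamond P A := by
  intro x hx U hU hxU
  have hne : (primalDiamond P A)ᶜ ∪ Uᶜ ≠ univ := fun h =>
    hP.univ_not_mem (h ▸ hx U hU hxU)
  obtain ⟨y, hy⟩ := (ne_univ_iff_exists_notMem _).1 hne
  rw [← compl_inter, notMem_compl_iff] at hy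
  exact hy.1 U hU hy.2

/-- If the topology is suitable for the primal, then `A⋄ ⊆ (A⋄)⋄`. -/
theorem SuitableForPrimal.primalDiamond_subset {X : Type*} [TopologicalSpace X]
    {P : Set (Set X)} (hs : SuitableForPrimal P) (hP : IsSetPrimal P) (A : Set X) :
    primalDiamond P A ⊆ primalDiamond P (primalDiamond P A) := by
  intro x hx U hU hxU
  have hsub : (Aᶜ ∪ primalDiamond P A) ∩ ((primalDiamond P A)ᶜ ∪ Uᶜ) ⊆ Aᶜ ∪ Uᶜ := by
    rintro y ⟨hyA | hyD, hyD' | hyU⟩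
    exacts [Or.inl hyA, Or.inl hyA, absurd hyD hyD', Or.inr hyU]
  exact (hP.mem_or_mem_of_inter_mem (hP.mem_of_subset (hx U hU hxU) hsub)).resolve_left (hs A)

theorem stmt_17 {X : Type*} [TopologicalSpace X] (P : Set (Set X)) (hP : IsSetPrimal P)
    (hs : SuitableForPrimal P) (A : Set X) :
    primalDiamond P (primalDiamond P A) = primalDiamond P A :=
  (primalDiamond_primalDiamond_subset hP A).antisymm (hs.primalDiamond_subset hP A)
end

section
/- Let (X,τ) be a topological space and 𝒫 a primal on X such that τ is suitable for 𝒫. Then a subset A of X is τ⋄-closed (i.e., A⋄ ⊆ A) if and only if A can be expressed as A = F ∪ B, where F is closed in (X,τ) and Bᶜ ∉ 𝒫. -/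
open Set

/-- The set `A⋄` is always closed. -/
theorem isClosed_primalDiamond {X : Type*} [TopologicalSpace X] (P : Set (Set X)) (A : Set X) :
    IsClosed (primalDiamond P A) := by
  rw [← isOpen_compl_iff, isOpen_iff_forall_mem_open]
  intro x hx
  simp only [primalDiamond, mem_compl_iff, mem_ofPred_eq, not_forall] at hx
  obtain ⟨U, hU, hxU, hAU⟩ := hx
  exact ⟨U, fun y hyU hy => hAU (hy U hU hyU), hU, hxU⟩

theorem stmt_18 {X : Type*} [TopologicalSpace X] (P : Set (Set X)) (hP : IsSetPrimal P)
    (hs : SuitableForPrimal P) (A : Set X) :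
    primalDiamond P A ⊆ A ↔
      ∃ F B : Set X, IsClosed F ∧ Bᶜ ∉ P ∧ A = F ∪ B := by
  constructor
  · intro hA
    refine ⟨primalDiamond P A, A \ primalDiamond P A, isClosed_primalDiamond P A, ?_,
      (union_sdiff_cancel hA).symm⟩
    rw [Set.sdiff_eq, compl_inter, compl_compl]
    exact hs A
  · rintro ⟨F, B, hF, hB, rfl⟩ x hx
    by_contra hxA
    refine hB (hP.mem_of_subset (hx Fᶜ hF.isOpen_compl fun h => hxA (Or.inl h)) fun y hy => ?_)
    by_cases hyF : y ∈ F
    · exact Or.inr (not_not_intro hyF)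
    · exact Or.inl fun h => h.elim hyF hy
end

section
/- Let (X,τ) be a topological space and 𝒫 a primal on X such that τ is suitable for 𝒫. Then for every open set A of X and every B ⊆ X, (A ∩ B)⋄ = (A ∩ B⋄)⋄ = cl(A ∩ B⋄), where cl denotes closure in (X,τ). -/
open Set

section Diamond

variable {X : Type*} [TopologicalSpace X] {P : Set (Set X)}

/-- The closure of `A ∩ B⋄` lies in `(A ∩ B)⋄` when `A` is open. -/
theorem closure_inter_primalDiamond_subset (hP : IsSetPrimal P) {A : Set X} (hA : IsOpen A)
    (B : Set X) : closure (A ∩ primalDiamond P B) ⊆ primalDiamond P (A ∩ B) := by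
  intro x hx U hU hxU
  obtain ⟨y, hyU, hyA, hyB⟩ := mem_closure_iff.1 hx U hU hxU
  refine hP.mem_of_subset (hyB (U ∩ A) (hU.inter hA) ⟨hyU, hyA⟩) fun z hz => ?_
  simp only [mem_union, mem_compl_iff, mem_inter_iff] at hz ⊢
  tauto

theorem primalDiamond_subset_closure (hP : IsSetPrimal P) (A : Set X) :
    primalDiamond P A ⊆ closure A := by
  intro x hx
  refine mem_closure_iff.2 fun U hU hxU => ?_
  by_contra hne
  have huniv : Aᶜ ∪ Uᶜ = univ := by
    rw [← compl_inter, inter_comm, not_nonempty_iff_eq_empty.1 hne, compl_empty]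
  exact hP.univ_not_mem (huniv ▸ hx U hU hxU)

/-- For a suitable topology, replacing `B` by `B⋄` does not shrink `(A ∩ B)⋄`. -/
theorem primalDiamond_inter_subset (hP : IsSetPrimal P) (hs : SuitableForPrimal P)
    (A B : Set X) : primalDiamond P (A ∩ B) ⊆ primalDiamond P (A ∩ primalDiamond P B) := by
  intro x hx U hU hxU
  have hinter : ((A ∩ primalDiamond P B)ᶜ ∪ Uᶜ) ∩ (Bᶜ ∪ primalDiamond P B) ∈ P := by
    refine hP.mem_of_subset (hx U hU hxU) fun z hz => ?_
    simp only [mem_union, mem_compl_iff, mem_inter_iff] at hz ⊢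
    tauto
  exact (hP.mem_or_mem_of_inter_mem hinter).resolve_right (hs B)

end Diamond

theorem stmt_19 {X : Type*} [TopologicalSpace X] (P : Set (Set X)) (hP : IsSetPrimal P)
    (hs : SuitableForPrimal P) (A B : Set X) (hA : IsOpen A) :
    primalDiamond P (A ∩ B) = primalDiamond P (A ∩ primalDiamond P B) ∧
    primalDiamond P (A ∩ B) = closure (A ∩ primalDiamond P B) := by
  have hsub := primalDiamond_inter_subset hP hs A B
  have hcl := primalDiamond_subset_closure hP (A ∩ primalDiamond P B)
  have hback := closure_inter_primalDiamond_subset hP hA B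
  exact ⟨hsub.antisymm (hcl.trans hback), (hsub.trans hcl).antisymm hback⟩
end
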